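/- Let D ⊆ F' × F × E' × E be a Dirac structure and let R ⊆ F × E be a linear resistive structure. Then the composition D ⇄ R := {(f', e') ∈ F' × E' : there exists (f_R, e_R) ∈ R with (f', −f_R, e', e_R) ∈ D} is a maximal monotone relation. -/

import Mathlib

/-- The duality pairing (standard inner product) on `ℝ^n`. -/
noncomputable def dot {n : ℕ} (e f : Fin n → ℝ) : ℝ := ∑ i, e i * f i

/-- The indefinite bilinear form on `(F' × F) × (E' × E)`, elements ordered
as `(f', f, e', e)`: `⟪p, q⟫ = ⟨e_p, f_q⟩ + ⟨e_q, f_p⟩` with the pairing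
summed over the two factors. -/
noncomputable def bform4 {n' n : ℕ}
    (p q : (Fin n' → ℝ) × (Fin n → ℝ) × (Fin n' → ℝ) × (Fin n → ℝ)) : ℝ :=
  (dot p.2.2.1 q.1 + dot p.2.2.2 q.2.1) + (dot q.2.2.1 p.1 + dot q.2.2.2 p.2.1)

/-- A Dirac structure on `F' × F × E' × E`: a subspace equal to its
orthogonal companion w.r.t. the indefinite bilinear form. -/
def IsDirac4 {n' n : ℕ}
    (D : Set ((Fin n' → ℝ) × (Fin n → ℝ) × (Fin n' → ℝ) × (Fin n → ℝ))) : Prop :=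
  (∃ W : Submodule ℝ ((Fin n' → ℝ) × (Fin n → ℝ) × (Fin n' → ℝ) × (Fin n → ℝ)),
      D = ↑W) ∧
  D = {p | ∀ q ∈ D, bform4 p q = 0}

/-- Monotone relation `M ⊆ F' × E'` (elements `(f', e')`). -/
def Mono2 {n : ℕ} (M : Set ((Fin n → ℝ) × (Fin n → ℝ))) : Prop :=
  ∀ p ∈ M, ∀ q ∈ M, 0 ≤ dot (p.2 - q.2) (p.1 - q.1)

/-- Maximal monotone relation. -/
def MaxMono2 {n : ℕ} (M : Set ((Fin n → ℝ) × (Fin n → ℝ))) : Prop :=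
  Mono2 M ∧ ∀ M', Mono2 M' → M ⊆ M' → M' = M

/-!
Maximality is obtained from Minty's criterion: a monotone relation whose sums `f + e` exhaust the
whole space is maximal. Solving `f' + e' = s` in `D ⇄ R` means closing the external port of `D` with
a unit resistor driven by the source `s`. By duality, an obstruction to solving this is an element
`(a, b, a, d)` of `D` whose part `(-b, d)` lies in the orthogonal companion of `R`. Maximality of
`R` makes its companion dissipate with the wrong sign, `⟨d, -b⟩ ≤ 0`, whereas power conservation in
`D` reads `⟨a, a⟩ + ⟨d, b⟩ = 0`. Hence `a = 0` and there is no obstruction.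

For `R = ker [R_f  -R_e]`, the matrix `R_f + R_e` is invertible, which is Minty's criterion for `R`.
It also lets one write any `(f, e) ∈ R` as `(-p, q) + (w, w)`, where `(p, q) = (R_eᵀ l, R_fᵀ l)` and
`(-p, q)` belongs to the companion of `R`, so that `⟨e, f⟩ = ⟨w, w⟩ + ⟨q, p⟩ ≥ 0`.
-/

open Matrix

theorem dot_eq_dotProduct {n : ℕ} (e f : Fin n → ℝ) : dot e f = e ⬝ᵥ f := rfl

section DotProduct

variable {ι K : Type*} [Fintype ι] [Ring K] [LinearOrder K] [IsStrictOrderedRing K]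

theorem dotProduct_self_nonneg (v : ι → K) : 0 ≤ v ⬝ᵥ v :=
  Finset.sum_nonneg fun i _ => mul_self_nonneg (v i)

theorem eq_zero_of_dotProduct_self_nonpos {v : ι → K} (h : v ⬝ᵥ v ≤ 0) : v = 0 :=
  dotProduct_self_eq_zero.1 (h.antisymm (dotProduct_self_nonneg v))

end DotProduct

section MonotoneRelations

variable {n : ℕ} {M : Set ((Fin n → ℝ) × (Fin n → ℝ))}
  {R : Submodule ℝ ((Fin n → ℝ) × (Fin n → ℝ))}

theorem Mono2.maxMono2_of_forall_exists_add_eq (hM : Mono2 M)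
    (hsum : ∀ s, ∃ p ∈ M, p.1 + p.2 = s) : MaxMono2 M := by
  refine ⟨hM, fun M' hM' hsub => hsub.antisymm' fun p hp => ?_⟩
  obtain ⟨q, hq, hqp⟩ := hsum (p.1 + p.2)
  have hsnd : p.2 - q.2 = -(p.1 - q.1) := by linear_combination -hqp
  have hnonneg := hM' p hp q (hsub hq)
  rw [dot_eq_dotProduct, hsnd, neg_dotProduct, neg_nonneg] at hnonneg
  have hfst : p.1 - q.1 = 0 := eq_zero_of_dotProduct_self_nonpos hnonneg
  have hpq : p = q :=
    Prod.ext (sub_eq_zero.1 hfst) (sub_eq_zero.1 (by rw [hsnd, hfst, neg_zero]))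
  exact hpq ▸ hq

theorem MaxMono2.mem_of_forall_dot_nonneg (hM : MaxMono2 M) {p : (Fin n → ℝ) × (Fin n → ℝ)}
    (hp : ∀ q ∈ M, 0 ≤ dot (p.2 - q.2) (p.1 - q.1)) : p ∈ M := by
  have hinsert : Mono2 (insert p M) := by
    rintro x (rfl | hx) y (rfl | hy)
    · simp [dot_eq_dotProduct]
    · exact hp y hy
    · simpa only [dot_eq_dotProduct, ← neg_sub y.1, ← neg_sub y.2, neg_dotProduct_neg]
        using hp x hx
    · exact hM.1 x hx y hy
  exact hM.2 _ hinsert (Set.subset_insert p M) ▸ Set.mem_insert p M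

theorem mono2_coe_iff : Mono2 (R : Set ((Fin n → ℝ) × (Fin n → ℝ))) ↔
    ∀ p ∈ R, 0 ≤ dot p.2 p.1 :=
  ⟨fun h p hp => by simpa using h p hp 0 R.zero_mem, fun h _ hp _ hq => h _ (R.sub_mem hp hq)⟩

theorem MaxMono2.dot_nonpos_of_companion
    (hR : MaxMono2 (R : Set ((Fin n → ℝ) × (Fin n → ℝ)))) {f e : Fin n → ℝ}
    (hfe : ∀ p ∈ R, dot e p.1 + dot p.2 f = 0) : dot e f ≤ 0 := by
  by_contra! hpos
  have hmem : (f, e) ∈ R := hR.mem_of_forall_dot_nonneg fun q hq => by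
    have hq_nonneg := mono2_coe_iff.1 hR.1 q hq
    have hcross := hfe q hq
    simp only [dot_eq_dotProduct, sub_dotProduct, dotProduct_sub]
      at hpos hq_nonneg hcross ⊢
    linarith
  have hself := hfe _ hmem
  linarith

end MonotoneRelations

section DiracStructures

variable {n' n : ℕ} {D : Set ((Fin n' → ℝ) × (Fin n → ℝ) × (Fin n' → ℝ) × (Fin n → ℝ))}

theorem exists_forall_eq_dot (φ : Module.Dual ℝ (Fin n → ℝ)) : ∃ u, ∀ x, φ x = dot u x := by
  obtain ⟨u, rfl⟩ := (dotProductEquiv ℝ (Fin n)).surjective φ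
  exact ⟨u, fun _ => rfl⟩

theorem exists_forall_eq_bform4
    (φ : Module.Dual ℝ ((Fin n' → ℝ) × (Fin n → ℝ) × (Fin n' → ℝ) × (Fin n → ℝ))) :
    ∃ q, ∀ p, φ p = bform4 q p := by
  obtain ⟨e', he'⟩ := exists_forall_eq_dot (φ ∘ₗ .inl ℝ _ _)
  obtain ⟨e, he⟩ := exists_forall_eq_dot (φ ∘ₗ .inr ℝ _ _ ∘ₗ .inl ℝ _ _)
  obtain ⟨f', hf'⟩ := exists_forall_eq_dot (φ ∘ₗ .inr ℝ _ _ ∘ₗ .inr ℝ _ _ ∘ₗ .inl ℝ _ _)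
  obtain ⟨f, hf⟩ := exists_forall_eq_dot (φ ∘ₗ .inr ℝ _ _ ∘ₗ .inr ℝ _ _ ∘ₗ .inr ℝ _ _)
  refine ⟨(f', f, e', e), fun p => ?_⟩
  simp only [bform4, dot_eq_dotProduct, dotProduct_comm p.2.2.1, dotProduct_comm p.2.2.2]
  simp only [← dot_eq_dotProduct, ← he', ← he, ← hf', ← hf, LinearMap.comp_apply, ← map_add]
  simp

theorem mem_of_forall_bform4_eq_zero
    {W : Submodule ℝ ((Fin n' → ℝ) × (Fin n → ℝ) × (Fin n' → ℝ) × (Fin n → ℝ))}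
    {p : (Fin n' → ℝ) × (Fin n → ℝ) × (Fin n' → ℝ) × (Fin n → ℝ)}
    (h : ∀ q, (∀ w ∈ W, bform4 q w = 0) → bform4 q p = 0) : p ∈ W := by
  refine (Subspace.forall_mem_dualAnnihilator_apply_eq_zero_iff W p).1 fun φ hφ => ?_
  obtain ⟨q, hq⟩ := exists_forall_eq_bform4 φ
  rw [hq]
  exact h q fun w hw => hq w ▸ (Submodule.mem_dualAnnihilator φ).1 hφ w hw

theorem IsDirac4.mem_iff (hD : IsDirac4 D)
    {p : (Fin n' → ℝ) × (Fin n → ℝ) × (Fin n' → ℝ) × (Fin n → ℝ)} :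
    p ∈ D ↔ ∀ q ∈ D, bform4 p q = 0 :=
  Set.ext_iff.1 hD.2 p

theorem IsDirac4.sub_mem (hD : IsDirac4 D)
    {p q : (Fin n' → ℝ) × (Fin n → ℝ) × (Fin n' → ℝ) × (Fin n → ℝ)}
    (hp : p ∈ D) (hq : q ∈ D) : p - q ∈ D := by
  obtain ⟨⟨W, rfl⟩, -⟩ := hD
  exact W.sub_mem hp hq

theorem IsDirac4.power_eq_zero (hD : IsDirac4 D)
    {p : (Fin n' → ℝ) × (Fin n → ℝ) × (Fin n' → ℝ) × (Fin n → ℝ)} (hp : p ∈ D) :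
    dot p.2.2.1 p.1 + dot p.2.2.2 p.2.1 = 0 := by
  have hself : bform4 p p = 0 := hD.mem_iff.1 hp p hp
  rw [bform4] at hself
  linarith

end DiracStructures

section Composition

variable {n' n : ℕ} {D : Set ((Fin n' → ℝ) × (Fin n → ℝ) × (Fin n' → ℝ) × (Fin n → ℝ))}

/-- The composition `D ⇄ R` of a relation `D` on `F' × F × E' × E` with a relation `R` on `F × E`.
The sign of the internal flow encodes that the flow out of `D` is the flow into `R`. -/
def diracComp (D : Set ((Fin n' → ℝ) × (Fin n → ℝ) × (Fin n' → ℝ) × (Fin n → ℝ)))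
    (R : Set ((Fin n → ℝ) × (Fin n → ℝ))) : Set ((Fin n' → ℝ) × (Fin n' → ℝ)) :=
  {p | ∃ fR eR, (fR, eR) ∈ R ∧ (p.1, -fR, p.2, eR) ∈ D}

theorem IsDirac4.mono2_diracComp (hD : IsDirac4 D) {R : Set ((Fin n → ℝ) × (Fin n → ℝ))}
    (hR : Mono2 R) : Mono2 (diracComp D R) := by
  rintro p ⟨f₁, e₁, h₁, hp⟩ q ⟨f₂, e₂, h₂, hq⟩
  have hbalance := hD.power_eq_zero (hD.sub_mem hp hq)
  have hdissipated := hR _ h₁ _ h₂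
  simp only [Prod.mk_sub_mk, neg_sub_neg, ← neg_sub f₁, dot_eq_dotProduct, dotProduct_neg]
    at hbalance hdissipated ⊢
  linarith

/-- The subspace `{(x, f, -x, -e) | (f, e) ∈ R}` of `F' × F × E' × E`: the internal port is
terminated by `R` and the external one by a unit resistor. The signs make
`(s, 0, 0, 0) ∈ D + unitTermination n' R` say that `f' + e' = s` is solvable in `D ⇄ R`. -/
def unitTermination (n' : ℕ) (R : Submodule ℝ ((Fin n → ℝ) × (Fin n → ℝ))) :
    Submodule ℝ ((Fin n' → ℝ) × (Fin n → ℝ) × (Fin n' → ℝ) × (Fin n → ℝ)) where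
  carrier := {p | p.2.2.1 = -p.1 ∧ (p.2.1, -p.2.2.2) ∈ R}
  add_mem' := by
    rintro p q ⟨hp, hpR⟩ ⟨hq, hqR⟩
    exact ⟨by simp [hp, hq, add_comm], by simpa [add_comm] using R.add_mem hpR hqR⟩
  zero_mem' := by
    refine ⟨neg_zero.symm, ?_⟩
    simp only [Prod.fst_zero, Prod.snd_zero, neg_zero]
    exact R.zero_mem
  smul_mem' := by
    rintro c p ⟨hp, hpR⟩
    exact ⟨by simp [hp], by simpa using R.smul_mem c hpR⟩

variable {R : Submodule ℝ ((Fin n → ℝ) × (Fin n → ℝ))}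

theorem mk_mem_unitTermination (x : Fin n' → ℝ) {f e : Fin n → ℝ} (h : (f, e) ∈ R) :
    (x, f, -x, -e) ∈ unitTermination n' R :=
  ⟨rfl, by simpa using h⟩

theorem effort_eq_flow_of_companion_unitTermination {a c : Fin n' → ℝ} {b d : Fin n → ℝ}
    (h : ∀ w ∈ unitTermination n' R, bform4 (a, b, c, d) w = 0) : c = a := by
  refine dotProduct_eq c a fun x => ?_
  have hx := h _ (mk_mem_unitTermination x R.zero_mem)
  simp only [bform4, dot_eq_dotProduct, neg_zero, dotProduct_zero, zero_dotProduct,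
    neg_dotProduct, dotProduct_comm x a] at hx
  linarith

theorem MaxMono2.dot_nonneg_of_companion_unitTermination
    (hR : MaxMono2 (R : Set ((Fin n → ℝ) × (Fin n → ℝ)))) {a c : Fin n' → ℝ} {b d : Fin n → ℝ}
    (h : ∀ w ∈ unitTermination n' R, bform4 (a, b, c, d) w = 0) : 0 ≤ dot d b := by
  have hcompanion : ∀ p ∈ R, dot d p.1 + dot p.2 (-b) = 0 := fun p hp => by
    have hp0 := h _ (mk_mem_unitTermination 0 hp)
    simpa [bform4, dot_eq_dotProduct] using hp0
  simpa [dot_eq_dotProduct] using hR.dot_nonpos_of_companion hcompanion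

theorem IsDirac4.effort_eq_zero_of_companion_unitTermination (hD : IsDirac4 D)
    (hR : MaxMono2 (R : Set ((Fin n → ℝ) × (Fin n → ℝ)))) {a c : Fin n' → ℝ} {b d : Fin n → ℝ}
    (hmem : (a, b, c, d) ∈ D)
    (h : ∀ w ∈ unitTermination n' R, bform4 (a, b, c, d) w = 0) : c = 0 := by
  obtain rfl : c = a := effort_eq_flow_of_companion_unitTermination h
  have hbalance := hD.power_eq_zero hmem
  have hnonneg := hR.dot_nonneg_of_companion_unitTermination h
  have hself : c ⬝ᵥ c ≤ 0 := by
    rw [← dot_eq_dotProduct]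
    linarith
  exact eq_zero_of_dotProduct_self_nonpos hself

theorem IsDirac4.exists_mem_diracComp_add_eq (hD : IsDirac4 D)
    (hR : MaxMono2 (R : Set ((Fin n → ℝ) × (Fin n → ℝ)))) (s : Fin n' → ℝ) :
    ∃ p ∈ diracComp D R, p.1 + p.2 = s := by
  obtain ⟨W, rfl⟩ := hD.1
  have hsource : (s, 0, 0, 0) ∈ W ⊔ unitTermination n' R := by
    refine mem_of_forall_bform4_eq_zero fun ⟨a, b, c, d⟩ hq => ?_
    have hqW : (a, b, c, d) ∈ (W : Set _) :=
      hD.mem_iff.2 fun w hw => hq w (Submodule.mem_sup_left hw)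
    have hc : c = 0 := hD.effort_eq_zero_of_companion_unitTermination hR hqW
      fun w hw => hq w (Submodule.mem_sup_right hw)
    simp [bform4, dot_eq_dotProduct, hc]
  obtain ⟨⟨f', f, e', e⟩, hW, ⟨x, fR, y, v⟩, ⟨hyx, hvR⟩, hsum⟩ := Submodule.mem_sup.1 hsource
  simp only [Prod.mk_add_mk, Prod.mk.injEq, add_eq_zero_iff_eq_neg] at hyx hsum
  obtain ⟨rfl, rfl, rfl, rfl⟩ := hsum
  exact ⟨(f', -y), ⟨fR, -v, hvR, hW⟩, by rw [hyx, neg_neg]⟩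

theorem dirac_comp_linearResistive_maxMonotone_general (hD : IsDirac4 D)
    (hR : MaxMono2 (R : Set ((Fin n → ℝ) × (Fin n → ℝ)))) : MaxMono2 (diracComp D R) :=
  (hD.mono2_diracComp hR.1).maxMono2_of_forall_exists_add_eq (hD.exists_mem_diracComp_add_eq hR)

end Composition

section ResistiveStructures

theorem vecMul_injective_of_rank_eq_card {m n K : Type*} [Fintype m] [Fintype n] [Field K]
    {A : Matrix m n K} (hA : A.rank = Fintype.card m) : Function.Injective A.vecMul := by
  rw [vecMul_injective_iff, linearIndependent_iff_card_eq_finrank_span, ← hA,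
    rank_eq_finrank_span_row, Set.finrank]

/-- The relation `{(f, e) | A f = B e}`, which is a linear resistive structure when `A Bᵀ` is
symmetric positive semidefinite and `[A  B]` has full row rank. -/
def kernelRelation {m n K : Type*} [Fintype n] [CommRing K] (A B : Matrix m n K) :
    Submodule K ((n → K) × (n → K)) :=
  LinearMap.ker (A.mulVecLin ∘ₗ .fst K _ _ - B.mulVecLin ∘ₗ .snd K _ _)

theorem mem_kernelRelation {m n K : Type*} [Fintype n] [CommRing K] {A B : Matrix m n K}
    {p : (n → K) × (n → K)} : p ∈ kernelRelation A B ↔ A *ᵥ p.1 = B *ᵥ p.2 :=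
  sub_eq_zero

theorem exists_mem_kernelRelation_add_eq {n K : Type*} [Fintype n] [DecidableEq n] [CommRing K]
    {A B : Matrix n n K} (hAB : IsUnit (A + B)) (s : n → K) :
    ∃ p ∈ kernelRelation A B, p.1 + p.2 = s := by
  obtain ⟨e, he⟩ := mulVec_surjective_iff_isUnit.2 hAB (A *ᵥ s)
  refine ⟨(s - e, e), mem_kernelRelation.2 ?_, sub_add_cancel s e⟩
  rw [mulVec_sub, ← he, add_mulVec, add_sub_cancel_left]

variable {ι K : Type*} [Fintype ι] [DecidableEq ι] [Field K] [LinearOrder K] [IsStrictOrderedRing K]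
  {A B : Matrix ι ι K}

theorem isUnit_add_of_rank_fromCols
    (hnonneg : ∀ l, 0 ≤ (l ᵥ* A) ⬝ᵥ (l ᵥ* B)) (hrank : (fromCols A B).rank = Fintype.card ι) :
    IsUnit (A + B) := by
  refine vecMul_injective_iff_isUnit.1 ((injective_iff_map_eq_zero (vecMulLinear (A + B))).2 ?_)
  intro l hl
  have hA : l ᵥ* A = -(l ᵥ* B) := eq_neg_of_add_eq_zero_left (by rwa [← vecMul_add])
  have hB : l ᵥ* B = 0 := eq_zero_of_dotProduct_self_nonpos (by simpa [hA] using hnonneg l)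
  refine vecMul_injective_of_rank_eq_card hrank ?_
  simp [vecMul_fromCols, hA, hB]

theorem dotProduct_nonneg_of_mem_kernelRelation (hAB : IsUnit (A + B))
    (hnonneg : ∀ l, 0 ≤ (l ᵥ* A) ⬝ᵥ (l ᵥ* B)) {p : (ι → K) × (ι → K)}
    (hp : p ∈ kernelRelation A B) : 0 ≤ p.2 ⬝ᵥ p.1 := by
  obtain ⟨f, e⟩ := p
  obtain ⟨l, hl : l ᵥ* (A + B) = e - f⟩ := vecMul_surjective_iff_isUnit.2 hAB (e - f)
  obtain ⟨w, he⟩ : ∃ w, e = l ᵥ* A + w := ⟨e - l ᵥ* A, by abel⟩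
  have hf : f = w - l ᵥ* B := by
    rw [← sub_sub_self e f, ← hl, vecMul_add, he]
    abel
  have horth : (l ᵥ* A) ⬝ᵥ f = (l ᵥ* B) ⬝ᵥ e := by
    rw [← dotProduct_mulVec, ← dotProduct_mulVec, mem_kernelRelation.1 hp]
  have hsplit : e ⬝ᵥ f = w ⬝ᵥ w + (l ᵥ* A) ⬝ᵥ (l ᵥ* B) := by
    simp only [he, hf, add_dotProduct, dotProduct_sub, dotProduct_comm (l ᵥ* B)] at horth ⊢
    linarith
  exact hsplit ▸ add_nonneg (dotProduct_self_nonneg w) (hnonneg l)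

theorem maxMono2_kernelRelation {n : ℕ} {Rf Re : Matrix (Fin n) (Fin n) ℝ}
    (hnonneg : ∀ l, 0 ≤ (l ᵥ* Rf) ⬝ᵥ (l ᵥ* Re)) (hrank : (fromCols Rf Re).rank = n) :
    MaxMono2 (kernelRelation Rf Re : Set ((Fin n → ℝ) × (Fin n → ℝ))) := by
  have hunit : IsUnit (Rf + Re) := isUnit_add_of_rank_fromCols hnonneg (by simpa using hrank)
  have hmono : Mono2 (kernelRelation Rf Re : Set ((Fin n → ℝ) × (Fin n → ℝ))) :=
    mono2_coe_iff.2 fun _ => dotProduct_nonneg_of_mem_kernelRelation hunit hnonneg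
  exact hmono.maxMono2_of_forall_exists_add_eq (exists_mem_kernelRelation_add_eq hunit)

theorem dotProduct_vecMul_nonneg_of_posSemidef_mul_transpose {m n : Type*} [Fintype m] [Fintype n]
    {A B : Matrix m n ℝ} (h : (A * Bᵀ).PosSemidef) (l : m → ℝ) : 0 ≤ (l ᵥ* A) ⬝ᵥ (l ᵥ* B) := by
  simpa [← mulVec_mulVec, dotProduct_mulVec, mulVec_transpose] using h.dotProduct_mulVec_nonneg l

end ResistiveStructures

/-- The composition of a Dirac structure with a linear resistive structure
(given by matrices `R_f`, `R_e` with `R_f R_eᵀ = R_e R_fᵀ ⪰ 0` and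
`rank [R_f R_e] = n`) is a maximal monotone relation. -/
theorem dirac_comp_linearResistive_maxMonotone {n' n : ℕ}
    (D : Set ((Fin n' → ℝ) × (Fin n → ℝ) × (Fin n' → ℝ) × (Fin n → ℝ)))
    (hD : IsDirac4 D)
    (Rf Re : Matrix (Fin n) (Fin n) ℝ)
    (hsym : Rf * Re.transpose = Re * Rf.transpose)
    (hpsd : (Rf * Re.transpose).PosSemidef)
    (hrank : (Matrix.fromCols Rf Re).rank = n) :
    MaxMono2 {p : (Fin n' → ℝ) × (Fin n' → ℝ) | ∃ fR eR : Fin n → ℝ,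
      Rf.mulVec fR - Re.mulVec eR = 0 ∧ (p.1, -fR, p.2, eR) ∈ D} :=
  dirac_comp_linearResistive_maxMonotone_general hD (R := kernelRelation Rf Re)
    (maxMono2_kernelRelation (dotProduct_vecMul_nonneg_of_posSemidef_mul_transpose hpsd) hrank)
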